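/- Let ρ ∈ (3, 4] and define p_± = ((ρ+1) ± √((ρ−3)(ρ+1)))/(2ρ). Then p_+, p_− ∈ [0, 1], p_+ ≠ p_−, and the logistic map g(x) = ρx(1−x) satisfies g(p_+) = p_− and g(p_−) = p_+. Consequently, gradient descent with step-size 1 on f_ρ started at x_0 = p_+ produces the non-constant 2-cyclic sequence p_+, p_−, p_+, p_−, …, so it does not converge. -/

import Mathlib

/-- The piecewise function `f_ρ` from the paper's discussion of the logistic map
embedded in gradient descent with step-size 1. -/
noncomputable def frho (ρ : ℝ) (x : ℝ) : ℝ :=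
  if |x| ≤ 1 then
    ρ / 3 * |x| ^ 3 + (1 - ρ) / 2 * x ^ 2 + (ρ - 1) ^ 3 / (6 * ρ ^ 2)
  else if |x| ≤ 3 / 2 then
    -(ρ / 3) * |x| ^ 3 + (1 + 3 * ρ) / 2 * x ^ 2 - 2 * ρ * |x| +
      ((ρ - 1) ^ 3 + 4 * ρ ^ 3) / (6 * ρ ^ 2)
  else
    1 / 2 * x ^ 2 + ρ / 4 * |x| + (4 * (ρ - 1) ^ 3 - 11 * ρ ^ 3) / (24 * ρ ^ 2)

/-!
Since `f_ρ' x = x - ρ x (1 - x)` on `[0, 1)`, gradient descent with step-size `1` iterates the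
logistic map there. For any square root `s` of `(ρ - 3)(ρ + 1)`, the logistic map sends
`(ρ + 1 + s) / (2ρ)` to the same expression with `-s` in place of `s`, so that `p₊` and `p₋` are
swapped. The iteration from `p₊` is therefore periodic, and a convergent periodic sequence is
constant.
-/

open Filter Topology

theorem periodic_of_recurrence {α : Type*} {g : α → α} {x : ℕ → α} {c : ℕ}
    (hrec : ∀ t, x (t + 1) = g (x t)) (hc : x c = x 0) : Function.Periodic x c := by
  intro t
  induction t with
  | zero => rw [zero_add, hc]
  | succ t ih => rw [add_right_comm, hrec, ih, hrec]

theorem eq_of_recurrence_of_swap {α : Type*} {g : α → α} {x : ℕ → α} {p q : α}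
    (hrec : ∀ t, x (t + 1) = g (x t)) (hx0 : x 0 = p) (hpq : g p = q) (hqp : g q = p) (t : ℕ) :
    x (2 * t) = p ∧ x (2 * t + 1) = q := by
  have heven : x (2 * t) = p := by
    induction t with
    | zero => exact hx0
    | succ t ih => rw [Nat.mul_succ, hrec, hrec, ih, hpq, hqp]
  exact ⟨heven, by rw [hrec, heven, hpq]⟩

theorem eq_of_periodic_of_tendsto {X : Type*} [TopologicalSpace X] [T1Space X] {u : ℕ → X}
    {c : ℕ} {l : X} (hc : 0 < c) (hu : Function.Periodic u c) (hl : Tendsto u atTop (𝓝 l))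
    (m n : ℕ) : u m = u n := by
  have hlim (k : ℕ) : u k = l := by
    have hsub : Tendsto (fun j : ℕ => k + j * c) atTop atTop :=
      tendsto_atTop_mono (fun j => (Nat.le_mul_of_pos_right j hc).trans (Nat.le_add_left _ k))
        tendsto_id
    exact tendsto_const_nhds_iff.mp ((hl.comp hsub).congr fun j => hu.nsmul j k)
  rw [hlim m, hlim n]

/-- The logistic map `x ↦ ρ x (1 - x)` with parameter `ρ`. -/
def logisticMap {R : Type*} [Ring R] (ρ x : R) : R :=
  ρ * x * (1 - x)

/-- The points `p_±` of the logistic 2-cycle, in the form `(ρ + 1 + s) / (2ρ)`. The parameter `s`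
stands for either square root of `(ρ - 3)(ρ + 1)`: `s = √((ρ - 3)(ρ + 1))` gives `p₊`, and `-s`
gives `p₋`. -/
def logisticCyclePoint {K : Type*} [Field K] (ρ s : K) : K :=
  (ρ + 1 + s) / (2 * ρ)

theorem logisticCyclePoint_neg {K : Type*} [Field K] (ρ s : K) :
    logisticCyclePoint ρ (-s) = (ρ + 1 - s) / (2 * ρ) := by
  rw [logisticCyclePoint, ← sub_eq_add_neg]

section Field

variable {K : Type*} [Field K] [NeZero (2 : K)] {ρ s : K}

theorem logisticMap_logisticCyclePoint (hρ : ρ ≠ 0) (hs : s ^ 2 = (ρ - 3) * (ρ + 1)) :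
    logisticMap ρ (logisticCyclePoint ρ s) = logisticCyclePoint ρ (-s) := by
  have h2 : (2 : K) ≠ 0 := two_ne_zero
  have hprod : (ρ + 1 + s) * (ρ - 1 - s) = 2 * (ρ + 1 - s) := by linear_combination -hs
  calc logisticMap ρ (logisticCyclePoint ρ s)
      = (ρ + 1 + s) * (ρ - 1 - s) / (2 * (2 * ρ)) := by
        unfold logisticMap logisticCyclePoint
        field_simp
        ring
    _ = 2 * (ρ + 1 - s) / (2 * (2 * ρ)) := by rw [hprod]
    _ = logisticCyclePoint ρ (-s) := by
        rw [mul_div_mul_left _ _ h2, logisticCyclePoint_neg]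

theorem logisticCyclePoint_injective (hρ : ρ ≠ 0) :
    Function.Injective (logisticCyclePoint ρ) := fun _ _ h =>
  add_left_cancel ((div_left_inj' (mul_ne_zero two_ne_zero hρ)).mp h)

end Field

theorem logisticCyclePoint_mem_Ioo {K : Type*} [Field K] [LinearOrder K] [IsStrictOrderedRing K]
    {ρ s : K} (hρ : 1 < ρ) (hs : s ^ 2 = (ρ - 3) * (ρ + 1)) :
    logisticCyclePoint ρ s ∈ Set.Ioo 0 1 := by
  have hsq : s ^ 2 < (ρ - 1) ^ 2 := by linear_combination hs + 4 * zero_lt_one (α := K)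
  obtain ⟨hlower, hupper⟩ := abs_lt.mp (abs_lt_of_sq_lt_sq hsq (sub_pos.mpr hρ).le)
  have hden : 0 < 2 * ρ := by linarith
  exact ⟨div_pos (by linarith) hden, (div_lt_one hden).mpr (by linarith)⟩

/-- One step `x ↦ x - f' x` of gradient descent on `f` with step-size `1`. -/
noncomputable def gradientStep (f : ℝ → ℝ) (x : ℝ) : ℝ :=
  x - deriv f x

theorem hasDerivAt_abs_pow {n : ℕ} (hn : 2 ≤ n) (x : ℝ) :
    HasDerivAt (fun y : ℝ => |y| ^ n) (n * |x| ^ (n - 2) * x) x := by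
  have h := hasDerivAt_abs_rpow x (p := n) (by exact_mod_cast hn)
  have hexp : (n : ℝ) - 2 = (n - 2 : ℕ) := by push_cast [hn]; rfl
  simpa only [hexp, Real.rpow_natCast] using h

theorem hasDerivAt_frho {ρ x : ℝ} (hx : |x| < 1) :
    HasDerivAt (frho ρ) (ρ * |x| * x + (1 - ρ) * x) x := by
  have hcubic : HasDerivAt
      (fun y => ρ / 3 * |y| ^ 3 + (1 - ρ) / 2 * y ^ 2 + (ρ - 1) ^ 3 / (6 * ρ ^ 2))
      (ρ * |x| * x + (1 - ρ) * x) x := by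
    refine ((((hasDerivAt_abs_pow (n := 3) (by norm_num) x).const_mul (ρ / 3)).add
      ((hasDerivAt_pow 2 x).const_mul ((1 - ρ) / 2))).add_const _).congr_deriv ?_
    push_cast
    ring
  refine hcubic.congr_of_eventuallyEq ?_
  filter_upwards [continuous_abs.continuousAt.eventually_lt_const hx] with y hy
  exact if_pos hy.le

theorem gradientStep_frho {ρ x : ℝ} (hx : x ∈ Set.Ico 0 1) :
    gradientStep (frho ρ) x = logisticMap ρ x := by
  have habs : |x| = x := abs_of_nonneg hx.1
  rw [gradientStep, (hasDerivAt_frho (habs.trans_lt hx.2)).deriv, habs, logisticMap]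
  ring

theorem frho_gd_two_cycle_general (ρ : ℝ) (hρ : 3 < ρ)
    (pplus pminus : ℝ)
    (hp : pplus = ((ρ + 1) + Real.sqrt ((ρ - 3) * (ρ + 1))) / (2 * ρ))
    (hm : pminus = ((ρ + 1) - Real.sqrt ((ρ - 3) * (ρ + 1))) / (2 * ρ))
    (x : ℕ → ℝ) (hx0 : x 0 = pplus)
    (hrec : ∀ t, x (t + 1) = x t - deriv (frho ρ) (x t)) :
    pplus ∈ Set.Icc (0 : ℝ) 1 ∧ pminus ∈ Set.Icc (0 : ℝ) 1 ∧ pplus ≠ pminus ∧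
      ρ * pplus * (1 - pplus) = pminus ∧ ρ * pminus * (1 - pminus) = pplus ∧
      (∀ t, x (t + 2) = x t) ∧
      (∀ t, x (2 * t) = pplus ∧ x (2 * t + 1) = pminus) ∧
      (∃ s t, x s ≠ x t) ∧ ¬∃ l, Filter.Tendsto x Filter.atTop (nhds l) := by
  set s := √((ρ - 3) * (ρ + 1))
  have hρ₁ : 1 < ρ := by linarith
  have hρ₀ : ρ ≠ 0 := by linarith
  have hdisc : 0 < (ρ - 3) * (ρ + 1) := mul_pos (by linarith) (by linarith)
  have hs : s ^ 2 = (ρ - 3) * (ρ + 1) := Real.sq_sqrt hdisc.le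
  have hs' : (-s) ^ 2 = (ρ - 3) * (ρ + 1) := (neg_sq s).trans hs
  have hplus : pplus = logisticCyclePoint ρ s := hp
  have hminus : pminus = logisticCyclePoint ρ (-s) := hm.trans (logisticCyclePoint_neg ρ s).symm
  have hplus_mem : pplus ∈ Set.Ioo 0 1 := hplus ▸ logisticCyclePoint_mem_Ioo hρ₁ hs
  have hminus_mem : pminus ∈ Set.Ioo 0 1 := hminus ▸ logisticCyclePoint_mem_Ioo hρ₁ hs'
  have hne : pplus ≠ pminus := hplus ▸ hminus ▸
    (logisticCyclePoint_injective hρ₀).ne (self_ne_neg.mpr (Real.sqrt_pos.mpr hdisc).ne')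
  have hpm : logisticMap ρ pplus = pminus := by
    rw [hplus, hminus, logisticMap_logisticCyclePoint hρ₀ hs]
  have hmp : logisticMap ρ pminus = pplus := by
    rw [hplus, hminus, logisticMap_logisticCyclePoint hρ₀ hs', neg_neg]
  have hcycle := eq_of_recurrence_of_swap (g := gradientStep (frho ρ)) hrec hx0
    ((gradientStep_frho (Set.Ioo_subset_Ico_self hplus_mem)).trans hpm)
    ((gradientStep_frho (Set.Ioo_subset_Ico_self hminus_mem)).trans hmp)
  have hper : Function.Periodic x 2 :=
    periodic_of_recurrence (g := gradientStep (frho ρ)) hrec ((hcycle 1).1.trans hx0.symm)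
  have hx01 : x 0 ≠ x 1 := by rwa [hx0, (hcycle 0).2]
  exact ⟨Set.Ioo_subset_Icc_self hplus_mem, Set.Ioo_subset_Icc_self hminus_mem, hne, hpm, hmp,
    hper, hcycle, ⟨0, 1, hx01⟩, fun ⟨_, hl⟩ =>
      hx01 (eq_of_periodic_of_tendsto two_pos hper hl 0 1)⟩

/-- For `ρ ∈ (3, 4]`, the points
`p± = ((ρ+1) ± √((ρ-3)(ρ+1))) / (2ρ)` lie in `[0, 1]`, are distinct, and are
swapped by the logistic map `x ↦ ρ x (1 - x)`. Consequently gradient descent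
with step-size 1 on `f_ρ` started at `p₊` is 2-cyclic, non-constant, and does
not converge. -/
theorem frho_gd_two_cycle (ρ : ℝ) (hρ : ρ ∈ Set.Ioc (3 : ℝ) 4)
    (pplus pminus : ℝ)
    (hp : pplus = ((ρ + 1) + Real.sqrt ((ρ - 3) * (ρ + 1))) / (2 * ρ))
    (hm : pminus = ((ρ + 1) - Real.sqrt ((ρ - 3) * (ρ + 1))) / (2 * ρ))
    (x : ℕ → ℝ) (hx0 : x 0 = pplus)
    (hrec : ∀ t, x (t + 1) = x t - deriv (frho ρ) (x t)) :
    pplus ∈ Set.Icc (0 : ℝ) 1 ∧ pminus ∈ Set.Icc (0 : ℝ) 1 ∧ pplus ≠ pminus ∧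
      ρ * pplus * (1 - pplus) = pminus ∧ ρ * pminus * (1 - pminus) = pplus ∧
      (∀ t, x (t + 2) = x t) ∧
      (∀ t, x (2 * t) = pplus ∧ x (2 * t + 1) = pminus) ∧
      (∃ s t, x s ≠ x t) ∧ ¬∃ l, Filter.Tendsto x Filter.atTop (nhds l) :=
  frho_gd_two_cycle_general ρ hρ.1 pplus pminus hp hm x hx0 hrec
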